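/- For every real γ with 2 < γ < 6 + 4√2 there exists a unique ξ₁ ∈ (0,1) such that F₁(γ,ξ₁) = 0; moreover ξ₁ is the strict absolute minimum point of F(γ,·) on (0,1]: for every ξ ∈ (0,1] with ξ ≠ ξ₁ one has F(γ,ξ) > F(γ,ξ₁). -/

import Mathlib

/-!
Put `G(ξ) = 8ξ²F₁(γ,ξ)`, a quartic polynomial in `ξ` with the same sign as `F₁(γ,·)` on `(0,1]`.
As a function of `s = ξ²` it is concave on `[0,1]`, since `G'(ξ)/ξ = 12γ²(1-ξ)² - 4γ² + 24γ`
decreases on `[0,1]`. Moreover `G(0) = -4 < 0`, and `G(1) = -(γ² - 12γ + 4) > 0`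
exactly because `γ` lies strictly between the roots `6 ± 4√2`. Hence once `G` has become
nonnegative it stays positive up to `ξ = 1` (`quartic_pos_of_nonneg`). So `G` has a single zero
`ξ₁` in `(0,1)`, and `F₁` is negative before it and positive after it; thus `F(γ,·)` strictly
decreases on `(0,ξ₁]` and strictly increases on `[ξ₁,1]`.
-/

/-- The value of the degenerate one-dimensional variational functional
`J(u) = ∫₀¹ (a(u)|u'|²/2 - γ u) dx` on the one-jump candidate minimizer whose jump
is located at `ξ`. -/
noncomputable def F (γ ξ : ℝ) : ℝ :=
  γ ^ 2 * ξ ^ 3 / 8 - γ ^ 2 * ξ ^ 2 / 2 + γ ^ 2 * ξ / 2 - γ ^ 2 / 6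
    + 3 * γ * ξ / 2 - 2 * γ + 1 / (2 * ξ)

/-- The derivative in `ξ` of `F`. -/
noncomputable def F₁ (γ ξ : ℝ) : ℝ :=
  3 * γ ^ 2 * ξ ^ 2 / 8 - γ ^ 2 * ξ + γ ^ 2 / 2 + 3 * γ / 2 - 1 / (2 * ξ ^ 2)

/-- The polynomial `8 ξ² F₁(γ,ξ)`. -/
noncomputable def quartic (γ ξ : ℝ) : ℝ :=
  3 * γ ^ 2 * ξ ^ 4 - 8 * γ ^ 2 * ξ ^ 3 + (4 * γ ^ 2 + 12 * γ) * ξ ^ 2 - 4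

lemma F₁_eq_quartic (γ : ℝ) {ξ : ℝ} (hξ : 0 < ξ) : F₁ γ ξ = quartic γ ξ / (8 * ξ ^ 2) := by
  unfold F₁ quartic
  field_simp
  ring

lemma quartic_one_pos {γ : ℝ} (hγ : 2 < γ) (hγ' : γ < 6 + 4 * Real.sqrt 2) :
    0 < quartic γ 1 := by
  have h2 : Real.sqrt 2 ^ 2 = 2 := Real.sq_sqrt (by norm_num)
  have h1 : 1 < Real.sqrt 2 := Real.lt_sqrt_of_sq_lt (by norm_num)
  have h : 0 < (6 + 4 * Real.sqrt 2 - γ) * (γ - (6 - 4 * Real.sqrt 2)) :=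
    mul_pos (by linarith) (by linarith)
  unfold quartic
  nlinarith

/-- Concavity of `quartic γ` in the variable `ξ²`, applied to the points `a² < b² ≤ 1`. -/
lemma quartic_pos_of_nonneg {γ a b : ℝ} (h1 : 0 < quartic γ 1) (ha : 0 ≤ a) (hab : a < b)
    (hb : b ≤ 1) (hGa : 0 ≤ quartic γ a) : 0 < quartic γ b := by
  have hb0 : 0 ≤ b := ha.trans hab.le
  have ha1 : a ≤ 1 := hab.le.trans hb
  have hbr : 0 ≤ 8 * (a * b + a + b) - 3 * ((1 + a) * (1 + b) * (a + b)) := by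
    have e1 := mul_nonneg ha (sub_nonneg.2 ha1)
    have e2 := mul_nonneg hb0 (sub_nonneg.2 hb)
    nlinarith [mul_nonneg e1 hb0, mul_nonneg e2 ha, mul_nonneg ha (sub_nonneg.2 hb),
      mul_nonneg hb0 (sub_nonneg.2 ha1)]
  have key : (1 - a ^ 2) * quartic γ b = (1 - b ^ 2) * quartic γ a + (b ^ 2 - a ^ 2) * quartic γ 1
      + γ ^ 2 * ((1 - a) * (1 - b) * (b - a))
        * (8 * (a * b + a + b) - 3 * ((1 + a) * (1 + b) * (a + b))) := by
    unfold quartic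
    ring
  have t1 : 0 ≤ (1 - b ^ 2) * quartic γ a := mul_nonneg (by nlinarith) hGa
  have t2 : 0 < (b ^ 2 - a ^ 2) * quartic γ 1 := mul_pos (by nlinarith) h1
  have t3 : 0 ≤ γ ^ 2 * ((1 - a) * (1 - b) * (b - a))
        * (8 * (a * b + a + b) - 3 * ((1 + a) * (1 + b) * (a + b))) :=
    mul_nonneg (mul_nonneg (sq_nonneg γ) (mul_nonneg (mul_nonneg (by linarith) (by linarith))
      (by linarith))) hbr
  have h : 0 < (1 - a ^ 2) * quartic γ b := by linarith
  exact pos_of_mul_pos_right h (by nlinarith)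

lemma hasDerivAt_F (γ : ℝ) {ξ : ℝ} (hξ : 0 < ξ) : HasDerivAt (F γ) (F₁ γ ξ) ξ := by
  have hp (n : ℕ) := hasDerivAt_pow n ξ
  have hinv : HasDerivAt (fun x : ℝ => 1 / (2 * x)) (-1 / (2 * ξ ^ 2)) ξ := by
    have h := (hasDerivAt_inv hξ.ne').const_mul (1 / 2 : ℝ)
    refine (h.congr_deriv (by field_simp)).congr_of_eventuallyEq (.of_forall fun x => ?_)
    simp [mul_comm]
  have h := ((((((((hp 3).const_mul (γ ^ 2)).div_const 8).sub
    (((hp 2).const_mul (γ ^ 2)).div_const 2)).add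
    (((hasDerivAt_id ξ).const_mul (γ ^ 2)).div_const 2)).sub_const (γ ^ 2 / 6)).add
    (((hasDerivAt_id ξ).const_mul (3 * γ)).div_const 2)).sub_const (2 * γ)).add hinv
  refine h.congr_deriv ?_
  unfold F₁
  push_cast
  ring

/-- For every real `γ` with `2 < γ < 6 + 4√2` there is a unique `ξ₁ ∈ (0,1)` with
`F₁(γ,ξ₁) = 0`, and `ξ₁` is the strict absolute minimum point of `F(γ,·)` on
`(0,1]`. -/
theorem F_strict_min (γ : ℝ) (hγ : 2 < γ) (hγ' : γ < 6 + 4 * Real.sqrt 2) :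
    ∃ ξ₁ ∈ Set.Ioo (0 : ℝ) 1, F₁ γ ξ₁ = 0 ∧
      (∀ ξ ∈ Set.Ioo (0 : ℝ) 1, F₁ γ ξ = 0 → ξ = ξ₁) ∧
      (∀ ξ ∈ Set.Ioc (0 : ℝ) 1, ξ ≠ ξ₁ → F γ ξ₁ < F γ ξ) := by
  have h1 := quartic_one_pos hγ hγ'
  have hcont : ContinuousOn (quartic γ) (Set.Icc 0 1) := by
    unfold quartic
    fun_prop
  obtain ⟨ξ₁, ⟨h0, hlt⟩, hz⟩ := intermediate_value_Ioo zero_le_one hcont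
    (show (0 : ℝ) ∈ Set.Ioo (quartic γ 0) (quartic γ 1) from ⟨by norm_num [quartic], h1⟩)
  have hpos : ∀ ξ, ξ₁ < ξ → ξ ≤ 1 → 0 < F₁ γ ξ := fun ξ h h' => by
    have hξ := h0.trans h
    have := quartic_pos_of_nonneg h1 h0.le h h' hz.ge
    rw [F₁_eq_quartic γ hξ]
    positivity
  have hneg : ∀ ξ, 0 < ξ → ξ < ξ₁ → F₁ γ ξ < 0 := fun ξ hξ h => by
    rw [F₁_eq_quartic γ hξ]
    refine div_neg_of_neg_of_pos ?_ (by positivity)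
    by_contra! hc
    exact (quartic_pos_of_nonneg h1 hξ.le h hlt.le hc).ne' hz
  have hanti : StrictAntiOn (F γ) (Set.Ioc 0 ξ₁) := by
    refine strictAntiOn_of_deriv_neg (convex_Ioc 0 ξ₁)
      (fun x hx => (hasDerivAt_F γ hx.1).continuousAt.continuousWithinAt) fun x hx => ?_
    rw [interior_Ioc] at hx
    rw [(hasDerivAt_F γ hx.1).deriv]
    exact hneg x hx.1 hx.2
  have hmono : StrictMonoOn (F γ) (Set.Icc ξ₁ 1) := by
    refine strictMonoOn_of_deriv_pos (convex_Icc ξ₁ 1)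
      (fun x hx => (hasDerivAt_F γ (h0.trans_le hx.1)).continuousAt.continuousWithinAt)
      fun x hx => ?_
    rw [interior_Icc] at hx
    rw [(hasDerivAt_F γ (h0.trans hx.1)).deriv]
    exact hpos x hx.1 hx.2.le
  refine ⟨ξ₁, ⟨h0, hlt⟩, by rw [F₁_eq_quartic γ h0, hz, zero_div], fun ξ hξ hF => ?_,
    fun ξ hξ hne => ?_⟩
  · rcases lt_trichotomy ξ ξ₁ with h | h | h
    · exact absurd hF (hneg ξ hξ.1 h).ne
    · exact h
    · exact absurd hF (hpos ξ h hξ.2.le).ne'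
  · rcases hne.lt_or_gt with h | h
    · exact hanti ⟨hξ.1, h.le⟩ ⟨h0, le_rfl⟩ h
    · exact hmono ⟨le_rfl, hlt.le⟩ ⟨h.le, hξ.2⟩ h
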